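/- Let F = [[L̃, -Δ̃],[Q* L̃, -Q*((1/R)I + Δ̃)]] arise from a strongly connected weighted digraph with Laplacian L̃ (L̃·1 = 0), positive diagonal matrices Δ̃ and Q*, and R > 0. Then zero is an eigenvalue of F with algebraic multiplicity one, and all other eigenvalues of F have negative real parts. -/

import Mathlib

open Matrix

/-- Abstract criterion: the generalized kernel of `f` is one-dimensional. -/
lemma aux_maxGen {V : Type*} [AddCommGroup V] [Module ℝ V]
    (f : Module.End ℝ V) (v : V) (hv : v ≠ 0) (hfv : f v = 0)
    (hker : ∀ w, f w = 0 → ∃ c : ℝ, w = c • v) (him : ∀ w, f w ≠ v) :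
    Module.finrank ℝ (f.maxGenEigenspace 0) = 1 := by
  have h : f.maxGenEigenspace 0 = Submodule.span ℝ {v} := by
    ext w
    rw [Module.End.mem_maxGenEigenspace, Submodule.mem_span_singleton]
    simp only [zero_smul, sub_zero]
    constructor
    · rintro ⟨k, hk⟩
      have key : ∀ k : ℕ, ∀ w, (f ^ k) w = 0 → f w = 0 := by
        intro k
        induction k with
        | zero => intro w hw; simp at hw; simp [hw]
        | succ k ih =>
          intro w hw
          rw [pow_succ, Module.End.mul_apply] at hw
          obtain ⟨c, hc⟩ := hker _ (ih _ hw)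
          by_cases h0 : c = 0
          · simpa [h0] using hc
          · exfalso
            apply him (c⁻¹ • w)
            rw [map_smul, hc, smul_smul, inv_mul_cancel₀ h0, one_smul]
      obtain ⟨c, hc⟩ := hker _ (key k w hk)
      exact ⟨c, hc.symm⟩
    · rintro ⟨c, rfl⟩
      exact ⟨1, by simp [hfv]⟩
  rw [h, finrank_span_singleton hv]

/-- Action of the block matrix, with coefficients mapped into a commutative ring. -/
lemma aux_action {K : Type*} [CommRing K] [Algebra ℝ K] {N : ℕ}
    (a : Fin N → Fin N → ℝ) (hdiag : ∀ i, a i i = 0) (S : ℝ)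
    (L : Matrix (Fin N) (Fin N) ℝ)
    (hL : ∀ i j, L i j = if i = j then -(∑ k, a i k) else a i j)
    (d q : Fin N → ℝ) (hd : ∀ i, d i = (∑ k, a i k) / S) (R : ℝ)
    (v : Fin N ⊕ Fin N → K) (i : Fin N) :
    let F : Matrix (Fin N ⊕ Fin N) (Fin N ⊕ Fin N) ℝ :=
      Matrix.fromBlocks ((1 / S) • L) (-Matrix.diagonal d) (Matrix.diagonal q * ((1 / S) • L))
        (-(Matrix.diagonal q * ((1 / R) • (1 : Matrix (Fin N) (Fin N) ℝ) + Matrix.diagonal d)))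
    let g := algebraMap ℝ K
    ((F.map g) *ᵥ v) (Sum.inl i) =
        ∑ j, g (a i j / S) * v (Sum.inl j) - g (d i) * v (Sum.inl i) - g (d i) * v (Sum.inr i) ∧
    ((F.map g) *ᵥ v) (Sum.inr i) =
        g (q i) * ((F.map g) *ᵥ v) (Sum.inl i) - g (q i / R) * v (Sum.inr i) := by
  intro F g
  have hLt : ∑ j, g (1 / S * L i j) * v (Sum.inl j) =
      ∑ j, g (a i j / S) * v (Sum.inl j) - g (d i) * v (Sum.inl i) := by
    have : ∀ j, g (1 / S * L i j) * v (Sum.inl j) =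
        g (a i j / S) * v (Sum.inl j) - (if i = j then g (d i) * v (Sum.inl j) else 0) := by
      intro j
      rw [hL]
      split_ifs with h
      · subst h
        rw [hdiag, hd]
        rw [show 1 / S * -∑ k, a i k = - ((∑ k, a i k) / S) by ring]
        simp
      · rw [show 1 / S * a i j = a i j / S by ring]; simp
    simp only [this, Finset.sum_sub_distrib]
    simp
  have h1 : ((F.map g) *ᵥ v) (Sum.inl i) =
        ∑ j, g (a i j / S) * v (Sum.inl j) - g (d i) * v (Sum.inl i)
          - g (d i) * v (Sum.inr i) := by
    rw [← hLt]
    simp only [F, Matrix.mulVec, dotProduct, Fintype.sum_sum_type, Matrix.map_apply,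
      Matrix.fromBlocks_apply₁₁, Matrix.fromBlocks_apply₁₂, Matrix.smul_apply, smul_eq_mul,
      Matrix.neg_apply, Matrix.diagonal_apply, map_neg]
    rw [sub_eq_add_neg]
    congr 1
    rw [Finset.sum_eq_single i] <;> simp +contextual [eq_comm]
  refine ⟨h1, ?_⟩
  rw [h1, ← hLt]
  simp only [F, Matrix.mulVec, dotProduct, Fintype.sum_sum_type, Matrix.map_apply,
      Matrix.fromBlocks_apply₂₁, Matrix.fromBlocks_apply₂₂, Matrix.diagonal_mul,
      Matrix.smul_apply, smul_eq_mul,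
      Matrix.neg_apply, Matrix.add_apply, Matrix.one_apply, Matrix.diagonal_apply, map_neg]
  rw [Finset.sum_eq_single (f := fun x => -g (q i * ((1 / R * if i = x then 1 else 0) +
    if i = x then d i else 0)) * v (Sum.inr x)) i]
  · simp only [map_mul, mul_assoc, ← Finset.mul_sum, if_true, map_add, div_eq_mul_inv, one_mul,
      mul_one]
    ring
  · intro b _ hb
    simp [Ne.symm hb]
  · simp

lemma aux_deg {N : ℕ} (hN : 2 ≤ N)
    (a : Fin N → Fin N → ℝ) (hnn : ∀ i j, 0 ≤ a i j)
    (hsc : ∀ i j : Fin N, Relation.ReflTransGen (fun p q => 0 < a p q) i j) (i : Fin N) :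
    0 < ∑ k, a i k := by
  have : Nontrivial (Fin N) := Fin.nontrivial_iff_two_le.2 hN
  obtain ⟨j, hj⟩ := exists_ne i
  rcases (hsc i j).cases_head with h | ⟨k, hk, _⟩
  · exact absurd h.symm hj
  · exact lt_of_lt_of_le hk
      (Finset.single_le_sum (f := fun k => a i k) (fun k _ => hnn i k) (Finset.mem_univ k))

/-- Maximum principle for a strongly connected digraph. -/
lemma aux_const {N : ℕ} (hN : 2 ≤ N) (b : Fin N → Fin N → ℝ) (hb : ∀ i j, 0 ≤ b i j)
    (hsc : ∀ i j : Fin N, Relation.ReflTransGen (fun p q => 0 < b p q) i j)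
    (x : Fin N → ℝ) (h : ∀ i, ∑ j, b i j * x j - (∑ j, b i j) * x i = 0) :
    ∃ c, ∀ i, x i = c := by
  have : Nonempty (Fin N) := ⟨⟨0, by omega⟩⟩
  obtain ⟨m, hm⟩ := Finite.exists_max x
  refine ⟨x m, fun i => ?_⟩
  induction hsc m i with
  | refl => rfl
  | @tail p r _ hpr ih =>
    have h0 : ∑ j, b p j * (x m - x j) = 0 := by
      have := h p
      rw [ih] at this
      simp only [mul_sub, Finset.sum_sub_distrib, ← Finset.sum_mul]
      linarith
    rw [Finset.sum_eq_zero_iff_of_nonneg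
      (fun j _ => mul_nonneg (hb p j) (sub_nonneg.2 (hm j)))] at h0
    have := h0 r (Finset.mem_univ r)
    rcases mul_eq_zero.1 this with h1 | h1
    · exact absurd h1 hpr.ne'
    · linarith

lemma aux_nopos {N : ℕ} (hN : 2 ≤ N) (b : Fin N → Fin N → ℝ) (hb : ∀ i j, 0 ≤ b i j)
    (x : Fin N → ℝ) (h : ∀ i, 0 < ∑ j, b i j * x j - (∑ j, b i j) * x i) : False := by
  have : Nonempty (Fin N) := ⟨⟨0, by omega⟩⟩
  obtain ⟨m, hm⟩ := Finite.exists_max x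
  have h1 := h m
  have h2 : ∑ j, b m j * x j ≤ ∑ j, b m j * x m :=
    Finset.sum_le_sum fun j _ => mul_le_mul_of_nonneg_left (hm j) (hb m j)
  rw [← Finset.sum_mul] at h2
  linarith

lemma aux_gain_pos (μ : ℂ) (hμ : 0 ≤ μ.re) (h0 : μ ≠ 0) (q r : ℝ) (hq : 0 < q) (hr : 0 < r) :
    0 < (μ * q / (μ + r)).re := by
  have hne : μ + r ≠ 0 := by
    intro h
    have := congrArg Complex.re h
    simp at this
    linarith
  rw [Complex.div_re, ← add_div]
  apply div_pos _ (Complex.normSq_pos.2 hne)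
  have hpos := Complex.normSq_pos.2 h0
  rw [Complex.normSq_apply] at hpos
  simp
  nlinarith [mul_pos hpos hq, mul_nonneg (mul_nonneg hμ hq.le) hr.le]

/-- Lemma 1 for a strongly connected digraph: the closed-loop matrix
`F = [[L̃, -Δ̃], [Q* L̃, -Q*((1/R) I + Δ̃)]]` built on the scaled Laplacian `L̃ = L/S` of
a strongly connected weighted digraph, with positive diagonal `Δ̃`, `Q*` and `R > 0`,
has a zero eigenvalue of algebraic multiplicity one, and all other eigenvalues have
negative real parts. -/
theorem F_spectrum_strongly_connected (N : ℕ) (hN : 2 ≤ N)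
    (a : Fin N → Fin N → ℝ) (hnn : ∀ i j, 0 ≤ a i j) (hdiag : ∀ i, a i i = 0)
    (hsc : ∀ i j : Fin N, Relation.ReflTransGen (fun p q => 0 < a p q) i j)
    (S : ℝ) (hS : 0 < S)
    (L : Matrix (Fin N) (Fin N) ℝ)
    (hL : ∀ i j, L i j = if i = j then -(∑ k, a i k) else a i j)
    (d q : Fin N → ℝ) (hd : ∀ i, d i = (∑ k, a i k) / S) (hq : ∀ i, 0 < q i)
    (R : ℝ) (hR : 0 < R) :
    let Lt : Matrix (Fin N) (Fin N) ℝ := (1 / S) • L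
    let Δ : Matrix (Fin N) (Fin N) ℝ := Matrix.diagonal d
    let Q : Matrix (Fin N) (Fin N) ℝ := Matrix.diagonal q
    let F : Matrix (Fin N ⊕ Fin N) (Fin N ⊕ Fin N) ℝ :=
      Matrix.fromBlocks Lt (-Δ) (Q * Lt) (-(Q * ((1 / R) • (1 : Matrix (Fin N) (Fin N) ℝ) + Δ)))
    Polynomial.rootMultiplicity 0 F.charpoly = 1 ∧
    (∀ μ : ℂ, (F.charpoly.map (algebraMap ℝ ℂ)).IsRoot μ → μ ≠ 0 → μ.re < 0) := by
  intro Lt Δ Q F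
  have hdpos : ∀ i, 0 < d i := fun i => by
    rw [hd]; exact div_pos (aux_deg hN a hnn hsc i) hS
  have hb : ∀ i j, 0 ≤ a i j / S := fun i j => div_nonneg (hnn i j) hS.le
  have hdb : ∀ i, d i = ∑ j, a i j / S := fun i => by rw [hd, Finset.sum_div]
  have hscb : ∀ i j : Fin N, Relation.ReflTransGen (fun p q => 0 < a p q / S) i j := fun i j =>
    Relation.ReflTransGen.mono (fun p q h => div_pos h hS) _ _ (hsc i j)
  have : Nonempty (Fin N) := ⟨⟨0, by omega⟩⟩
  constructor
  · have hact := fun v i => aux_action (K := ℝ) a hdiag S L hL d q hd R v i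
    simp only [Algebra.algebraMap_self, RingHom.id_apply] at hact
    have hF : F.map (RingHom.id ℝ) = F := by ext; simp
    have hact' : ∀ (v : Fin N ⊕ Fin N → ℝ) i, (F *ᵥ v) (Sum.inl i) =
        ∑ j, a i j / S * v (Sum.inl j) - d i * v (Sum.inl i) - d i * v (Sum.inr i) ∧
        (F *ᵥ v) (Sum.inr i) = q i * (F *ᵥ v) (Sum.inl i) - q i / R * v (Sum.inr i) := by
      intro v i
      have := hact v i
      change ((F.map (RingHom.id ℝ)) *ᵥ v) _ = _ ∧ ((F.map (RingHom.id ℝ)) *ᵥ v) _ =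
        q i * ((F.map (RingHom.id ℝ)) *ᵥ v) _ - _ at this
      rwa [hF] at this
    rw [← Matrix.charpoly_toLin', ← LinearMap.finrank_maxGenEigenspace_eq]
    apply aux_maxGen _ (Sum.elim (fun _ => 1) (fun _ => 0) : Fin N ⊕ Fin N → ℝ)
    · intro h
      have := congrFun h (Sum.inl (Classical.arbitrary _))
      simp at this
    · rw [Matrix.toLin'_apply]
      have h1 : ∀ i, (F *ᵥ (Sum.elim (fun _ => 1) (fun _ => 0) : Fin N ⊕ Fin N → ℝ))
          (Sum.inl i) = 0 := by
        intro i
        rw [(hact' _ i).1]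
        simp [hdb]
      funext s
      rcases s with i | i
      · simpa using h1 i
      · rw [(hact' _ i).2, h1]; simp
    · intro w hw
      rw [Matrix.toLin'_apply] at hw
      have hy : ∀ i, w (Sum.inr i) = 0 := by
        intro i
        have := (hact' w i).2
        rw [hw] at this
        simp at this
        rcases this with h | h
        · rcases h with h | h
          · exact absurd h (hq i).ne'
          · exact absurd h hR.ne'
        · exact h
      obtain ⟨c, hc⟩ := aux_const hN (fun i j => a i j / S) hb hscb (fun i => w (Sum.inl i)) (by
        intro i
        have := (hact' w i).1
        rw [hw, hy] at this
        rw [← hdb]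
        simp only [Pi.zero_apply] at this
        linarith)
      refine ⟨c, ?_⟩
      funext s
      rcases s with i | i
      · simpa using hc i
      · simpa using hy i
    · intro w hw
      rw [Matrix.toLin'_apply] at hw
      have hy : ∀ i, w (Sum.inr i) = R := by
        intro i
        have := (hact' w i).2
        rw [hw] at this
        simp at this
        have hqi := (hq i).ne'
        field_simp at this
        rw [zero_mul] at this
        rcases mul_eq_zero.1 this.symm with h | h
        · exact absurd h hqi
        · linarith
      apply aux_nopos hN (fun i j => a i j / S) hb (fun i => w (Sum.inl i))
      intro i
      have := (hact' w i).1
      rw [hw, hy] at this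
      rw [← hdb]
      simp only [Sum.elim_inl] at this
      have := mul_pos (hdpos i) hR
      linarith
  · intro μ hroot hμ0
    by_contra hre
    push Not at hre
    rw [← Matrix.charpoly_map, Polynomial.IsRoot.def, Matrix.eval_charpoly,
      ← Matrix.exists_mulVec_eq_zero_iff] at hroot
    obtain ⟨v, hv0, hv⟩ := hroot
    have hFv : (F.map (algebraMap ℝ ℂ)) *ᵥ v = μ • v := by
      rw [Matrix.sub_mulVec, sub_eq_zero] at hv
      rw [← hv]
      simp [Matrix.scalar_apply, ← Matrix.smul_one_eq_diagonal, Matrix.smul_mulVec]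
    have hact : ∀ i, ((F.map (algebraMap ℝ ℂ)) *ᵥ v) (Sum.inl i) = _ ∧
        ((F.map (algebraMap ℝ ℂ)) *ᵥ v) (Sum.inr i) =
          (algebraMap ℝ ℂ (q i)) * ((F.map (algebraMap ℝ ℂ)) *ᵥ v) (Sum.inl i) - _ :=
      fun i => aux_action (K := ℂ) a hdiag S L hL d q hd R v i
    rw [hFv] at hact
    simp only [Pi.smul_apply, smul_eq_mul, Complex.coe_algebraMap] at hact
    have hne : ∀ i, μ + ((q i / R : ℝ) : ℂ) ≠ 0 := by
      intro i h
      have := congrArg Complex.re h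
      simp only [Complex.add_re, Complex.ofReal_re, Complex.zero_re] at this
      have := div_pos (hq i) hR
      linarith
    have hy : ∀ i, v (Sum.inr i) = μ * q i / (μ + ((q i / R : ℝ) : ℂ)) * v (Sum.inl i) := by
      intro i
      have := (hact i).2
      rw [div_mul_eq_mul_div, eq_div_iff (hne i)]
      linear_combination this
    obtain ⟨m, hm⟩ := Finite.exists_max (fun i => ‖v (Sum.inl i)‖)
    have hx : v (Sum.inl m) = 0 := by
      by_contra hxm
      have hxpos : 0 < ‖v (Sum.inl m)‖ := norm_pos_iff.2 hxm
      set g : ℂ := μ * q m / (μ + ((q m / R : ℝ) : ℂ)) with hg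
      have hgpos : 0 < g.re := aux_gain_pos μ hre hμ0 (q m) (q m / R) (hq m) (div_pos (hq m) hR)
      have heq : ∑ j, ((a m j / S : ℝ) : ℂ) * v (Sum.inl j) =
          (d m + d m * g + μ) * v (Sum.inl m) := by
        have := (hact m).1
        rw [hy m] at this
        linear_combination -this
      have hle : ‖∑ j, ((a m j / S : ℝ) : ℂ) * v (Sum.inl j)‖ ≤ d m * ‖v (Sum.inl m)‖ := by
        refine (norm_sum_le _ _).trans ?_
        rw [hdb, Finset.sum_mul]
        apply Finset.sum_le_sum
        intro j _
        rw [norm_mul, Complex.norm_real, Real.norm_of_nonneg (hb m j)]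
        exact mul_le_mul_of_nonneg_left (hm j) (hb m j)
      rw [heq, norm_mul] at hle
      have h1 := le_of_mul_le_mul_right hle hxpos
      have h2 := (Complex.re_le_norm _).trans h1
      simp at h2
      have := mul_pos (hdpos m) hgpos
      linarith
    apply hv0
    have hxall : ∀ i, v (Sum.inl i) = 0 := by
      intro i
      have := hm i
      simp only [hx, norm_zero] at this
      exact norm_le_zero_iff.1 this
    funext s
    rcases s with i | i
    · exact hxall i
    · rw [hy, hxall]; simp
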